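/- arXiv:math/0701312 — 2 statements merged into one kernel-verified Lean document; each statement's English description precedes it below -/
import Mathlib

section
/- Let n ≥ 2 and let F, G be coprime completely reducible homogeneous polynomials of the same degree d ≥ 1 in R = MvPolynomial (Fin (n+1)) ℂ such that: the generic fiber of the pencil 𝒫 generated by F and G is irreducible; the pencil is essential (the linear factors of F together with those of G span the full (n+1)-dimensional space of degree-1 forms); and there exists a member K = aF + bG of 𝒫, distinct from F and from G, of the form K = (∏_{i=1}^r ℓ_i)·(∏_{j=1}^s g_j^{e_j}) with ℓ_i linear forms, g_j irreducible homogeneous polynomials, and e_j ≥ 2 for all j (a product of linear forms and non-reduced polynomials). Then the Jacobian determinant det(∂_j b_i)_{0≤i,j≤n} of the coefficients b_i = F·∂_iG − G·∂_iF of ω₀ = F dG − G dF is not the zero polynomial (equivalently, the Gauss map of the foliation associated to 𝒫 is non-degenerate, i.e. dominant). -/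
open MvPolynomial

noncomputable section

/-- A linear form: a nonzero homogeneous polynomial of degree 1. -/
def IsLinearForm (n : ℕ) (α : MvPolynomial (Fin (n + 1)) ℂ) : Prop :=
  α ≠ 0 ∧ α.IsHomogeneous 1

/-- A completely reducible polynomial: a product of linear forms. -/
def CompletelyReducible (n : ℕ) (P : MvPolynomial (Fin (n + 1)) ℂ) : Prop :=
  ∃ s : Multiset (MvPolynomial (Fin (n + 1)) ℂ),
    (∀ α ∈ s, IsLinearForm n α) ∧ P = s.prod

/-- F and G have no common non-unit factor. -/
def RelPrime (n : ℕ) (F G : MvPolynomial (Fin (n + 1)) ℂ) : Prop :=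
  ∀ p : MvPolynomial (Fin (n + 1)) ℂ, p ∣ F → p ∣ G → IsUnit p

/-- The generic fiber of the pencil generated by F and G is irreducible. -/
def GenericFiberIrreducible (n : ℕ) (F G : MvPolynomial (Fin (n + 1)) ℂ) : Prop :=
  {c : ℂ | ¬ Irreducible (F + C c * G)}.Finite


theorem aux_frac_deriv {R K : Type*} [CommRing R] [IsDomain R] [Field K] [Algebra R K]
    [IsFractionRing R K] (d : Derivation ℤ R R) :
    ∃ D : Derivation ℤ K K, ∀ f : R, D (algebraMap R K f) = algebraMap R K (d f) := by
  let φ₀ : R →+* TrivSqZeroExt K K :=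
    { toFun := fun f => TrivSqZeroExt.inl (algebraMap R K f) +
        TrivSqZeroExt.inr (algebraMap R K (d f))
      map_one' := by ext <;> simp
      map_zero' := by ext <;> simp
      map_add' := fun x y => by ext <;> simp [Algebra.smul_def]
      map_mul' := fun x y => by
        ext
        · simp
        · simp only [Derivation.leibniz, smul_eq_mul, map_add, map_mul, TrivSqZeroExt.snd_add,
            TrivSqZeroExt.snd_inl, TrivSqZeroExt.snd_inr, TrivSqZeroExt.snd_mul,
            TrivSqZeroExt.fst_add, TrivSqZeroExt.fst_inl, TrivSqZeroExt.fst_inr,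
            MulOpposite.smul_eq_mul_unop, MulOpposite.unop_op]
          ring }
  have hu : ∀ y : nonZeroDivisors R, IsUnit (φ₀ y) := by
    intro y
    rw [TrivSqZeroExt.isUnit_iff_isUnit_fst]
    simp [φ₀]
  let φ : K →+* TrivSqZeroExt K K := IsLocalization.lift (M := nonZeroDivisors R) hu
  have hφ : ∀ f : R, φ (algebraMap R K f) = φ₀ f := fun f => IsLocalization.lift_eq hu f
  have hfst : ∀ x, (φ x).fst = x := by
    have : (TrivSqZeroExt.fstHom ℤ K K : TrivSqZeroExt K K →+* K).comp φ = RingHom.id K := by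
      apply IsLocalization.ringHom_ext (nonZeroDivisors R)
      ext f
      simp [hφ, φ₀]
    intro x
    exact DFunLike.congr_fun this x
  let L : K →+ K :=
    { toFun := fun x => (φ x).snd
      map_zero' := by simp
      map_add' := by simp }
  refine ⟨Derivation.mk' L.toIntLinearMap ?_, ?_⟩
  · intro x y
    simp [L, hfst]
    ring
  · intro f
    change (φ (algebraMap R K f)).snd = _
    rw [hφ]
    change (TrivSqZeroExt.inl _ + TrivSqZeroExt.inr _ : TrivSqZeroExt K K).snd = _
    rw [TrivSqZeroExt.snd_add, TrivSqZeroExt.snd_inl, TrivSqZeroExt.snd_inr, zero_add]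

theorem aux_powers {K ι N : Type*} [Field K] [CharZero K] [Fintype ι] [Fintype N]
    (a : ι → K) (A : ι → N → K) (D : N → Derivation ℤ K K)
    (hDa : ∀ k α, D k (a α) = A α k) (hDA : ∀ k α i, D k (A α i) = 0)
    (ε : ι → K) (hε : ∀ k α, D k (ε α) = 0) (v : N → K)
    (h1 : ∀ i, ∑ α, ε α * A α i * (∑ l, A α l * v l) * (a α)⁻¹ ^ 2 = 0) (j : ℕ) :
    ∀ i, ∑ α, ε α * A α i * (∑ l, A α l * v l) ^ (j + 1) * (a α)⁻¹ ^ (j + 2) = 0 := by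
  induction j with
  | zero => simpa using h1
  | succ j ih =>
    intro k
    set σ : ι → K := fun α => ∑ l, A α l * v l with hσ
    have hDσ : ∀ α, D k (σ α) = ∑ l, A α l * D k (v l) := by
      intro α
      simp [hσ, hDA]
    have h2 : ∑ i, v i * D k (∑ α, ε α * A α i * σ α ^ (j + 1) * (a α)⁻¹ ^ (j + 2)) = 0 := by
      apply Finset.sum_eq_zero
      intro i _
      rw [ih i]; simp
    have h3 : ∑ i, D k (v i) * (∑ α, ε α * A α i * σ α ^ (j + 1) * (a α)⁻¹ ^ (j + 2)) = 0 := by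
      apply Finset.sum_eq_zero
      intro i _
      rw [ih i]; simp
    have e3 : ∑ i, D k (v i) * (∑ α, ε α * A α i * σ α ^ (j + 1) * (a α)⁻¹ ^ (j + 2))
        = ∑ α, ε α * D k (σ α) * σ α ^ (j + 1) * (a α)⁻¹ ^ (j + 2) := by
      simp_rw [Finset.mul_sum]
      rw [Finset.sum_comm]
      refine Finset.sum_congr rfl fun α _ => ?_
      rw [hDσ, Finset.mul_sum, Finset.sum_mul, Finset.sum_mul]
      refine Finset.sum_congr rfl fun i _ => ?_
      ring
    have e2 : ∑ i, v i * D k (∑ α, ε α * A α i * σ α ^ (j + 1) * (a α)⁻¹ ^ (j + 2))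
        = ∑ α, (((j : K) + 1) * (ε α * D k (σ α) * σ α ^ (j + 1) * (a α)⁻¹ ^ (j + 2))
          - ((j : K) + 2) * (ε α * A α k * σ α ^ (j + 1 + 1) * (a α)⁻¹ ^ (j + 1 + 2))) := by
      simp_rw [map_sum, Finset.mul_sum]
      rw [Finset.sum_comm]
      refine Finset.sum_congr rfl fun α _ => ?_
      have : ∀ i, v i * D k (ε α * A α i * σ α ^ (j + 1) * (a α)⁻¹ ^ (j + 2)) =
          (A α i * v i) * (ε α * (((j : K) + 1) * σ α ^ j * D k (σ α) * (a α)⁻¹ ^ (j + 2)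
            - ((j : K) + 2) * σ α ^ (j + 1) * A α k * (a α)⁻¹ ^ (j + 3))) := by
        intro i
        simp only [Derivation.leibniz, Derivation.leibniz_pow, Derivation.leibniz_inv, hDA, hε,
          hDa, smul_eq_mul, nsmul_eq_mul, Nat.add_sub_cancel]
        have : j + 2 - 1 = j + 1 := by omega
        rw [this]
        push_cast
        ring
      simp_rw [this]
      rw [← Finset.sum_mul]
      change σ α * _ = _
      ring
    rw [e2, Finset.sum_sub_distrib, ← Finset.mul_sum, ← Finset.mul_sum, ← e3, h3] at h2
    have hj : (j : K) + 2 ≠ 0 := by exact_mod_cast (by omega : j + 2 ≠ 0)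
    have h4 : ((j : K) + 2) * ∑ α, ε α * A α k * σ α ^ (j + 1 + 1) * (a α)⁻¹ ^ (j + 1 + 2) = 0 := by
      linear_combination -h2
    exact (mul_eq_zero.mp h4).resolve_left hj

theorem aux_vandermonde {K ι : Type*} [Field K] [DecidableEq K] [Fintype ι]
    (c s : ι → K) (h : ∀ j : ℕ, ∑ α, c α * s α ^ (j + 1) = 0) (t : K) (ht : t ≠ 0) :
    ∑ α ∈ Finset.univ.filter (fun α => s α = t), c α = 0 := by
  have hp : ∀ p : Polynomial K, ∑ α, c α * (s α * p.eval (s α)) = 0 := by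
    intro p
    induction p using Polynomial.induction_on' with
    | add p q hp hq =>
      simp only [Polynomial.eval_add, mul_add, Finset.sum_add_distrib, hp, hq, add_zero]
    | monomial n b =>
      have := congrArg (b * ·) (h n)
      simp only [mul_zero, Finset.mul_sum] at this
      rw [← this]
      refine Finset.sum_congr rfl fun α _ => ?_
      simp; ring
  let S : Finset K := (Finset.univ.image s).erase t
  have h1 := hp (∏ y ∈ S, (Polynomial.X - Polynomial.C y))
  simp only [Polynomial.eval_prod, Polynomial.eval_sub, Polynomial.eval_X, Polynomial.eval_C] at h1
  have hne : t * ∏ y ∈ S, (t - y) ≠ 0 := by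
    refine mul_ne_zero ht (Finset.prod_ne_zero_iff.mpr fun y hy => ?_)
    exact sub_ne_zero.mpr (Finset.ne_of_mem_erase hy).symm
  have h2 : ∑ α, c α * (s α * ∏ y ∈ S, (s α - y)) =
      (∑ α ∈ Finset.univ.filter (fun α => s α = t), c α) * (t * ∏ y ∈ S, (t - y)) := by
    rw [Finset.sum_mul, Finset.sum_filter]
    refine Finset.sum_congr rfl fun α _ => ?_
    split_ifs with hα
    · rw [hα]
    · have : s α ∈ S := Finset.mem_erase.mpr ⟨hα, Finset.mem_image_of_mem _ (Finset.mem_univ _)⟩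
      rw [Finset.prod_eq_zero this (sub_self _)]; simp
  rw [h2] at h1
  exact (mul_eq_zero.mp h1).resolve_right hne

theorem aux_logderiv {K ι : Type*} [Field K] (D : Derivation ℤ K K) (a : ι → K)
    (ha : ∀ α, a α ≠ 0) (S : Finset ι) :
    D (∏ α ∈ S, a α) = (∏ α ∈ S, a α) * ∑ α ∈ S, D (a α) * (a α)⁻¹ := by
  classical
  induction S using Finset.induction_on with
  | empty => simp
  | insert x S hx ih =>
    rw [Finset.prod_insert hx, Finset.sum_insert hx, Derivation.leibniz, ih]
    have := ha x
    simp only [smul_eq_mul]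
    field_simp
    ring

theorem aux_irred {N : Type*} (p : MvPolynomial N ℂ) (h0 : p ≠ 0) (h : p.IsHomogeneous 1) :
    Irreducible p := by
  apply irreducible_of_totalDegree_eq_one (h.totalDegree h0)
  intro x hx
  rw [isUnit_iff_ne_zero]
  rintro rfl
  apply h0
  ext i
  simpa using hx i

/-- coprime homogeneous `P`, `Q` with vanishing Wronskians: `P` has degree zero. -/
theorem aux_wronskian {N : Type*} [Fintype N] (P Q : MvPolynomial N ℂ) (m : ℕ)
    (hP : P.IsHomogeneous m) (hP0 : P ≠ 0)
    (hrel : IsRelPrime P Q) (h : ∀ i, P * pderiv i Q = Q * pderiv i P) : m = 0 := by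
  by_contra hm
  have hz : ∀ i, pderiv i P = 0 := by
    intro i
    by_contra hne
    have hd : P ∣ pderiv i P :=
      hrel.dvd_of_dvd_mul_left (Dvd.intro _ (h i))
    have h1 := totalDegree_le_of_dvd_of_isDomain hd hne
    have h2 := (hP.pderiv (i := i)).totalDegree hne
    have h3 := hP.totalDegree hP0
    omega
  have := hP.sum_X_mul_pderiv
  simp [hz, hm, hP0] at this

theorem aux_list {n : ℕ} {P : MvPolynomial (Fin (n + 1)) ℂ}
    (s : Multiset (MvPolynomial (Fin (n + 1)) ℂ))
    (hs : ∀ α ∈ s, α ≠ 0 ∧ α.IsHomogeneous 1) (hP : P = s.prod) :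
    ∃ (p : ℕ) (f : Fin p → MvPolynomial (Fin (n + 1)) ℂ),
      (∀ i, f i ≠ 0 ∧ (f i).IsHomogeneous 1) ∧ P = ∏ i, f i := by
  induction s using Quotient.inductionOn with
  | h l =>
    refine ⟨l.length, l.get, fun i => hs _ (by simp), ?_⟩
    rw [hP, ← List.prod_ofFn, List.ofFn_get]
    simp

set_option maxHeartbeats 800000 in
theorem aux_main (K : Type) [Field K] (n d : ℕ) [Algebra (MvPolynomial (Fin (n + 1)) ℂ) K]
    [IsFractionRing (MvPolynomial (Fin (n + 1)) ℂ) K] (F G : MvPolynomial (Fin (n + 1)) ℂ)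
    (hF : F.IsHomogeneous d) (hG : G.IsHomogeneous d) (hrel : IsRelPrime F G)
    {p q : ℕ} (f : Fin p → MvPolynomial (Fin (n + 1)) ℂ) (g : Fin q → MvPolynomial (Fin (n + 1)) ℂ)
    (hf : ∀ i, f i ≠ 0 ∧ (f i).IsHomogeneous 1) (hg : ∀ i, g i ≠ 0 ∧ (g i).IsHomogeneous 1)
    (hFf : F = ∏ i, f i) (hGg : G = ∏ i, g i)
    (hess : ∀ i : Fin (n + 1),
      X i ∈ Submodule.span ℂ
        {α : MvPolynomial (Fin (n + 1)) ℂ | (α ≠ 0 ∧ α.IsHomogeneous 1) ∧ (α ∣ F ∨ α ∣ G)}) :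
    (Matrix.of fun i j =>
      pderiv j (F * pderiv i G - G * pderiv i F)).det ≠ 0 := by
  classical
  intro hdet
  obtain ⟨v₀, hv₀, hJ⟩ := Matrix.exists_mulVec_eq_zero_iff.mpr hdet
  obtain ⟨ψ, hψdef⟩ : ∃ ψ : (MvPolynomial (Fin (n + 1)) ℂ) →+* K, ψ = algebraMap (MvPolynomial (Fin (n + 1)) ℂ) K := ⟨_, rfl⟩
  have hψ : Function.Injective ψ := by rw [hψdef]; exact IsFractionRing.injective (MvPolynomial (Fin (n + 1)) ℂ) K
  have hψ0 : ∀ {x : (MvPolynomial (Fin (n + 1)) ℂ)}, x ≠ 0 → ψ x ≠ 0 := fun hx => (map_ne_zero_iff ψ hψ).mpr hx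
  have : CharZero K := charZero_of_injective_ringHom hψ
  choose D hD using fun k : Fin (n + 1) =>
    aux_frac_deriv (R := (MvPolynomial (Fin (n + 1)) ℂ)) (K := K) ((pderiv k : Derivation ℂ (MvPolynomial (Fin (n + 1)) ℂ) (MvPolynomial (Fin (n + 1)) ℂ)).restrictScalars ℤ)
  replace hD : ∀ k (x : (MvPolynomial (Fin (n + 1)) ℂ)), D k (ψ x) = ψ (pderiv k x) := fun k x => by
    rw [hψdef]; exact hD k x
  -- the linear forms
  let α : Fin p ⊕ Fin q → (MvPolynomial (Fin (n + 1)) ℂ) := Sum.elim f g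
  have hα : ∀ i, α i ≠ 0 ∧ (α i).IsHomogeneous 1 := by
    rintro (i | i)
    · exact hf i
    · exact hg i
  have hconst : ∀ (β : (MvPolynomial (Fin (n + 1)) ℂ)), β.IsHomogeneous 1 → ∀ i k, pderiv k (pderiv i β) = 0 := by
    intro β hβ i k
    have h0 : (pderiv i β).IsHomogeneous 0 := hβ.pderiv
    rw [← totalDegree_zero_iff_isHomogeneous, totalDegree_eq_zero_iff_eq_C] at h0
    rw [h0, pderiv_C]
  let a : Fin p ⊕ Fin q → K := fun i => ψ (α i)
  have ha : ∀ i, a i ≠ 0 := fun i => hψ0 (hα i).1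
  let A : Fin p ⊕ Fin q → Fin (n + 1) → K := fun i k => ψ (pderiv k (α i))
  have hDa : ∀ k i, D k (a i) = A i k := fun k i => hD k _
  have hDA : ∀ k i l, D k (A i l) = 0 := fun k i l => by
    change D k (ψ _) = 0
    rw [hD, hconst _ (hα i).2, map_zero]
  let ε : Fin p ⊕ Fin q → K := Sum.elim (fun _ => -1) (fun _ => 1)
  have hε : ∀ k i, D k (ε i) = 0 := by
    rintro k (i | i) <;> simp [ε]
  let x : Fin (n + 1) → K := fun i => ψ (X i)
  have hAx : ∀ i, ∑ l, A i l * x l = a i := by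
    intro i
    have := (hα i).2.sum_X_mul_pderiv
    rw [one_smul] at this
    simp only [A, x, a, ← map_mul, ← map_sum]
    congr 1
    refine Eq.trans ?_ this
    exact Finset.sum_congr rfl fun l _ => mul_comm _ _
  let η : Fin (n + 1) → K := fun i => ∑ t, ε t * A t i * (a t)⁻¹
  have hF0 : F ≠ 0 := by
    rw [hFf]; exact Finset.prod_ne_zero_iff.mpr fun i _ => (hf i).1
  have hG0 : G ≠ 0 := by
    rw [hGg]; exact Finset.prod_ne_zero_iff.mpr fun i _ => (hg i).1
  let u : K := ψ (F * G)
  have hu0 : u ≠ 0 := hψ0 (mul_ne_zero hF0 hG0)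
  have hb : ∀ i, ψ (F * pderiv i G - G * pderiv i F) = u * η i := by
    intro i
    have h1 := aux_logderiv (D i) (fun t => ψ (f t)) (fun t => hψ0 (hf t).1) Finset.univ
    have h2 := aux_logderiv (D i) (fun t => ψ (g t)) (fun t => hψ0 (hg t).1) Finset.univ
    rw [← map_prod, ← hFf, hD] at h1
    rw [← map_prod, ← hGg, hD] at h2
    simp only [hD] at h1 h2
    simp only [map_sub, map_mul, h1, h2, u, η, Fintype.sum_sum_type, ε, A, a, α, Sum.elim_inl,
      Sum.elim_inr, neg_mul, one_mul, Finset.sum_neg_distrib]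
    ring
  have hDη : ∀ j i, D j (η i) = - ∑ t, ε t * A t i * A t j * (a t)⁻¹ ^ 2 := by
    intro j i
    simp only [η, map_sum, ← Finset.sum_neg_distrib]
    refine Finset.sum_congr rfl fun t _ => ?_
    simp only [Derivation.leibniz, Derivation.leibniz_inv, hDA, hε, hDa, smul_eq_mul]
    ring
  -- the kernel vector
  let v : Fin (n + 1) → K := fun j => ψ (v₀ j)
  let c : K := ∑ j, v j * D j u
  have hJK : ∀ i, c * η i = u * ∑ t, ε t * A t i * (∑ l, A t l * v l) * (a t)⁻¹ ^ 2 := by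
    intro i
    have h1 := congrArg ψ (congrFun hJ i)
    simp only [Matrix.mulVec, dotProduct, Matrix.of_apply, Pi.zero_apply, map_zero, map_sum,
      map_mul ψ] at h1
    simp only [← hD, hb, Derivation.leibniz, hDη, smul_eq_mul] at h1
    have h2 : ∑ t, ε t * A t i * (∑ l, A t l * v l) * (a t)⁻¹ ^ 2 =
        ∑ j, v j * ∑ t, ε t * A t i * A t j * (a t)⁻¹ ^ 2 := by
      simp only [Finset.mul_sum, Finset.sum_mul]
      rw [Finset.sum_comm]
      refine Finset.sum_congr rfl fun j _ => Finset.sum_congr rfl fun t _ => ?_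
      ring
    have h3 : c * η i = ∑ j, v j * D j u * η i := Finset.sum_mul _ _ _
    rw [h2, h3, Finset.mul_sum, ← sub_eq_zero, ← Finset.sum_sub_distrib, ← h1]
    refine Finset.sum_congr rfl fun j _ => ?_
    ring
  let w : Fin (n + 1) → K := fun j => u * v j - c * x j
  have hw : w ≠ 0 := by
    intro hw
    have hwj : ∀ j, u * v j = c * x j := fun j => sub_eq_zero.mp (congrFun hw j)
    have hE : ∑ j, x j * D j u = ((d + d : ℕ) : K) * u := by
      have := congrArg ψ (hF.mul hG).sum_X_mul_pderiv
      simpa [x, u, hD] using this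
    have h1 : u * c = c * (((d + d : ℕ) : K) * u) := by
      rw [← hE, Finset.mul_sum, Finset.mul_sum]
      refine Finset.sum_congr rfl fun j _ => ?_
      rw [← mul_assoc, hwj, mul_assoc]
    have hd : (1 : K) - ((d + d : ℕ) : K) ≠ 0 := by
      rw [sub_ne_zero]
      exact_mod_cast (by omega : 1 ≠ d + d)
    have hc : c = 0 := by
      have : (u * (1 - ((d + d : ℕ) : K))) * c = 0 := by linear_combination h1
      exact (mul_eq_zero.mp this).resolve_left (mul_ne_zero hu0 hd)
    apply hv₀
    funext j
    have := hwj j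
    rw [hc, zero_mul] at this
    exact hψ (((mul_eq_zero.mp this).resolve_left hu0).trans (map_zero ψ).symm)
  have hAw : ∀ t, ∑ l, A t l * w l = u * (∑ l, A t l * v l) - c * a t := by
    intro t
    rw [← hAx t, Finset.mul_sum, Finset.mul_sum, ← Finset.sum_sub_distrib]
    refine Finset.sum_congr rfl fun l _ => ?_
    simp only [w]; ring
  have hker : ∀ i, ∑ t, ε t * A t i * (∑ l, A t l * w l) * (a t)⁻¹ ^ 2 = 0 := by
    intro i
    have h1 := hJK i
    simp only [η] at h1
    rw [← sub_eq_zero.mpr h1.symm, Finset.mul_sum _ _ u, Finset.mul_sum _ _ c, ← Finset.sum_sub_distrib]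
    refine Finset.sum_congr rfl fun t _ => ?_
    rw [hAw]
    have := ha t
    field_simp
  have hpow := aux_powers a A D hDa hDA ε hε w hker
  -- some form does not vanish on `w`
  have hex : ∃ t, ∑ l, A t l * w l ≠ 0 := by
    by_contra hcon
    push Not at hcon
    apply hw
    funext i
    have key : ∀ β ∈ Submodule.span ℂ
        {α : (MvPolynomial (Fin (n + 1)) ℂ) | (α ≠ 0 ∧ α.IsHomogeneous 1) ∧ (α ∣ F ∨ α ∣ G)},
        ∑ l, ψ (pderiv l β) * w l = 0 := by
      intro β hβ
      induction hβ using Submodule.span_induction with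
      | zero => simp
      | add y z _ _ hy hz => simp [add_mul, Finset.sum_add_distrib, hy, hz]
      | smul r y _ hy =>
        simp only [smul_eq_C_mul, pderiv_C_mul, map_mul, mul_assoc, ← Finset.mul_sum, hy, mul_zero]
      | mem β hβ =>
        obtain ⟨⟨hβ0, hβ1⟩, hdiv⟩ := hβ
        have hirr := aux_irred β hβ0 hβ1
        have hdvd : ∃ t, β ∣ α t := by
          rcases hdiv with h | h
          · rw [hFf] at h
            obtain ⟨t, -, ht⟩ := hirr.prime.exists_mem_finset_dvd h
            exact ⟨Sum.inl t, ht⟩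
          · rw [hGg] at h
            obtain ⟨t, -, ht⟩ := hirr.prime.exists_mem_finset_dvd h
            exact ⟨Sum.inr t, ht⟩
        obtain ⟨t, ht⟩ := hdvd
        obtain ⟨y, hy⟩ := hirr.dvd_symm (aux_irred (α t) (hα t).1 (hα t).2) ht
        have hy0 : y ≠ 0 := by rintro rfl; simp [hβ0] at hy
        have hyd := congrArg totalDegree hy
        rw [totalDegree_mul_of_isDomain (hα t).1 hy0, hβ1.totalDegree hβ0,
          (hα t).2.totalDegree (hα t).1] at hyd
        have hyC := totalDegree_eq_zero_iff_eq_C.mp (by omega : y.totalDegree = 0)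
        rw [hyC, mul_comm] at hy
        rw [hy]
        simp only [pderiv_C_mul, map_mul, mul_assoc, ← Finset.mul_sum]
        have := hcon t
        simp only [A] at this
        rw [this, mul_zero]
    have := key _ (hess i)
    simpa [pderiv_X, Pi.single_apply] using this
  obtain ⟨t₀, ht₀⟩ := hex
  let s : Fin p ⊕ Fin q → K := fun t => (∑ l, A t l * w l) * (a t)⁻¹
  have hs₀ : s t₀ ≠ 0 := mul_ne_zero ht₀ (inv_ne_zero (ha t₀))
  have hclass : ∀ i, ∑ t ∈ Finset.univ.filter (fun t => s t = s t₀),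
      ε t * A t i * (a t)⁻¹ = 0 := by
    intro i
    refine aux_vandermonde _ s (fun j => ?_) _ hs₀
    rw [← hpow j i]
    refine Finset.sum_congr rfl fun t _ => ?_
    simp only [s]; ring
  let SF : Finset (Fin p) := Finset.univ.filter (fun t => s (Sum.inl t) = s t₀)
  let SG : Finset (Fin q) := Finset.univ.filter (fun t => s (Sum.inr t) = s t₀)
  let P : (MvPolynomial (Fin (n + 1)) ℂ) := ∏ t ∈ SF, f t
  let Q : (MvPolynomial (Fin (n + 1)) ℂ) := ∏ t ∈ SG, g t
  have hP0 : P ≠ 0 := Finset.prod_ne_zero_iff.mpr fun i _ => (hf i).1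
  have hQ0 : Q ≠ 0 := Finset.prod_ne_zero_iff.mpr fun i _ => (hg i).1
  have hPF : P ∣ F := by rw [hFf]; exact Finset.prod_dvd_prod_of_subset _ _ _ (Finset.subset_univ _)
  have hQG : Q ∣ G := by rw [hGg]; exact Finset.prod_dvd_prod_of_subset _ _ _ (Finset.subset_univ _)
  have hPQ : IsRelPrime P Q := fun y h1 h2 => hrel (h1.trans hPF) (h2.trans hQG)
  have hPh : P.IsHomogeneous SF.card := by
    have := IsHomogeneous.prod SF f (fun _ => 1) (fun i _ => (hf i).2)
    simpa using this
  have hQh : Q.IsHomogeneous SG.card := by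
    have := IsHomogeneous.prod SG g (fun _ => 1) (fun i _ => (hg i).2)
    simpa using this
  have hW : ∀ i, P * pderiv i Q = Q * pderiv i P := by
    intro i
    apply hψ
    have h1 := aux_logderiv (D i) (fun t => ψ (f t)) (fun t => hψ0 (hf t).1) SF
    have h2 := aux_logderiv (D i) (fun t => ψ (g t)) (fun t => hψ0 (hg t).1) SG
    rw [← map_prod, hD] at h1
    rw [← map_prod, hD] at h2
    simp only [hD] at h1 h2
    have h3 := hclass i
    rw [Finset.sum_filter, Fintype.sum_sum_type, ← Finset.sum_filter, ← Finset.sum_filter] at h3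
    simp only [ε, A, a, α, Sum.elim_inl, Sum.elim_inr, neg_mul, one_mul,
      Finset.sum_neg_distrib] at h3
    change ψ (pderiv i P) = ψ P * _ at h1
    change ψ (pderiv i Q) = ψ Q * _ at h2
    rw [map_mul, map_mul, h1, h2]
    linear_combination (ψ P * ψ Q) * h3
  have e1 := aux_wronskian P Q _ hPh hP0 hPQ hW
  have e2 := aux_wronskian Q P _ hQh hQ0 hPQ.symm (fun i => (hW i).symm)
  rw [Finset.card_eq_zero] at e1 e2
  rcases t₀ with t | t
  · have : t ∈ SF := by simp [SF]
    simp [e1] at this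
  · have : t ∈ SG := by simp [SG]
    simp [e2] at this

/-- Theorem (generalized Gauss map): for an essential pencil on ℙⁿ with irreducible
generic fiber, two completely reducible fibers F and G, and a third fiber that is a
product of linear forms and non-reduced polynomials, the Gauss map of the associated
foliation (defined by ω₀ = F dG - G dF) is non-degenerate: the Jacobian determinant
of the coefficients bᵢ = F·∂ᵢG - G·∂ᵢF is not the zero polynomial. -/
theorem gauss_map_nondegenerate_two_fibers
    (n d : ℕ) (hn : 2 ≤ n) (hd : 1 ≤ d)
    (F G : MvPolynomial (Fin (n + 1)) ℂ)
    (hF : F.IsHomogeneous d) (hG : G.IsHomogeneous d)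
    (hFcr : CompletelyReducible n F) (hGcr : CompletelyReducible n G)
    (hcop : RelPrime n F G)
    (hgen : GenericFiberIrreducible n F G)
    -- the pencil is essential
    (hess : ∀ i : Fin (n + 1),
      X i ∈ Submodule.span ℂ
        {α : MvPolynomial (Fin (n + 1)) ℂ | IsLinearForm n α ∧ (α ∣ F ∨ α ∣ G)})
    -- a member K = aF + bG distinct from F and G, a product of linear forms and
    -- non-reduced polynomials
    (a b : ℂ) (ha : a ≠ 0) (hb : b ≠ 0)
    (K : MvPolynomial (Fin (n + 1)) ℂ)
    (hK : K = C a * F + C b * G)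
    (r s : ℕ)
    (ℓ : Fin r → MvPolynomial (Fin (n + 1)) ℂ)
    (hℓ : ∀ i, IsLinearForm n (ℓ i))
    (g : Fin s → MvPolynomial (Fin (n + 1)) ℂ)
    (hgirr : ∀ j, Irreducible (g j))
    (dg : Fin s → ℕ) (hghom : ∀ j, (g j).IsHomogeneous (dg j))
    (e : Fin s → ℕ) (he : ∀ j, 2 ≤ e j)
    (hKfact : K = (∏ i, ℓ i) * ∏ j, g j ^ e j) :
    (Matrix.of fun i j =>
      pderiv j (F * pderiv i G - G * pderiv i F)).det ≠ 0 := by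
  obtain ⟨sF, hsF, hFs⟩ := hFcr
  obtain ⟨sG, hsG, hGs⟩ := hGcr
  obtain ⟨p, f, hf, hFf⟩ := aux_list sF hsF hFs
  obtain ⟨q, g', hg', hGg⟩ := aux_list sG hsG hGs
  exact aux_main (FractionRing (MvPolynomial (Fin (n + 1)) ℂ)) n d F G hF hG
    (fun y h1 h2 => hcop y h1 h2) f g' hf hg' hFf hGg hess
end
end

section
/- Let n ≥ 2 and let F, G be coprime completely reducible homogeneous polynomials of the same degree d ≥ 1 in R = MvPolynomial (Fin (n+1)) ℂ such that: the generic fiber of the pencil 𝒫 generated by F and G is irreducible; the pencil is essential (the linear factors of F together with those of G span the full (n+1)-dimensional space of degree-1 forms); and there exists a member K = aF + bG of 𝒫, distinct from F and from G, of the form K = (∏_{i=1}^r ℓ_i)·(∏_{j=1}^s g_j^{e_j}) with ℓ_i linear forms, g_j irreducible homogeneous polynomials of degree at least 2, and e_j ≥ 2 for all j. Then n ≤ 6. -/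
open MvPolynomial

noncomputable section

/-- Every derivation of a domain extends to its fraction field. -/
theorem exists_extend_derivation {R K : Type*} [CommRing R] [IsDomain R] [Field K]
    [Algebra R K] [IsFractionRing R K] (d : Derivation ℤ R R) :
    ∃ D : Derivation ℤ K K, ∀ p : R, D (algebraMap R K p) = algebraMap R K (d p) := by
  let φ : R →+* TrivSqZeroExt K K :=
    { toFun := fun p => TrivSqZeroExt.inl (algebraMap R K p) + TrivSqZeroExt.inr (algebraMap R K (d p))
      map_one' := by
        apply TrivSqZeroExt.ext <;> simp
      map_zero' := by
        apply TrivSqZeroExt.ext <;> simp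
      map_add' := fun p q => by
        apply TrivSqZeroExt.ext <;> simp [-DualNumber.inr_eq_smul_eps]
      map_mul' := fun p q => by
        apply TrivSqZeroExt.ext <;> simp [Derivation.leibniz, mul_comm, -DualNumber.inr_eq_smul_eps] }
  have hφ1 : ∀ p, (φ p).fst = algebraMap R K p := fun p => by simp [φ]
  have hφ2 : ∀ p, (φ p).snd = algebraMap R K (d p) := fun p => by simp [φ, -DualNumber.inr_eq_smul_eps]
  have hu : ∀ y : nonZeroDivisors R, IsUnit (φ y) := by
    intro y
    rw [TrivSqZeroExt.isUnit_iff_isUnit_fst, hφ1]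
    exact IsLocalization.map_units K y
  let ψ : K →+* TrivSqZeroExt K K := IsLocalization.lift hu
  have hψ : ∀ p, ψ (algebraMap R K p) = φ p := fun p => IsLocalization.lift_eq hu p
  have hfst : ∀ z, (ψ z).fst = z := by
    have : ((TrivSqZeroExt.fstHom ℤ K K).toRingHom.comp ψ) = RingHom.id K := by
      apply IsLocalization.ringHom_ext (nonZeroDivisors R)
      ext p
      change (ψ (algebraMap R K p)).fst = algebraMap R K p
      rw [hψ, hφ1]
    intro z
    exact congrArg (fun f => f z) this
  let D0 : K →+ K :=
    { toFun := fun z => (ψ z).snd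
      map_zero' := by simp
      map_add' := fun a b => by simp }
  refine ⟨Derivation.mk' D0.toIntLinearMap ?_, ?_⟩
  · intro a b
    change (ψ (a * b)).snd = a • (ψ b).snd + b • (ψ a).snd
    rw [map_mul, TrivSqZeroExt.snd_mul, hfst, hfst]
    simp [mul_comm]
  · intro p
    change (ψ (algebraMap R K p)).snd = _
    rw [hψ, hφ2]

/-- Abstract power-sum propagation for the kernel of the logarithmic Hessian. -/
theorem kernel_power_sums {K ι κ : Type*} [Field K] [CharZero K] [Fintype ι] [Fintype κ]
    (D : κ → Derivation ℤ K K) (A : ι → κ → K) (hA : ∀ i j l, D l (A i j) = 0)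
    (y : ι → K) (hy : ∀ i, y i ≠ 0) (hDy : ∀ i l, D l (y i) = A i l)
    (c : ι → K) (hc : ∀ i l, D l (c i) = 0)
    (v : κ → K)
    (hv : ∀ j, ∑ i, c i * ((∑ l, A i l * v l) / y i) * (A i j / y i) = 0) (k : ℕ) :
    ∀ j, ∑ i, c i * ((∑ l, A i l * v l) / y i) ^ (k + 1) * (A i j / y i) = 0 := by
  induction k with
  | zero => simpa using hv
  | succ k ih =>
    set lam : ι → K := fun i => (∑ l, A i l * v l) / y i with hlam
    intro w
    have hDlam : ∀ i, D w (lam i) = (∑ l, A i l * D w (v l)) / y i - lam i * (A i w / y i) := by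
      intro i
      have h1 : lam i * y i = ∑ l, A i l * v l := by
        simp only [hlam]; field_simp [hy i]
      have h2 := congrArg (D w) h1
      rw [Derivation.leibniz, map_sum, hDy] at h2
      simp only [Derivation.leibniz, hA, smul_eq_mul, mul_zero, add_zero] at h2
      have := hy i
      field_simp
      linear_combination h2
    have hDe : ∀ i j, D w (A i j / y i) = - (A i j / y i) * (A i w / y i) := by
      intro i j
      have h1 : (A i j / y i) * y i = A i j := by field_simp [hy i]
      have h2 := congrArg (D w) h1
      rw [Derivation.leibniz, hA, hDy] at h2
      simp only [smul_eq_mul] at h2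
      have := hy i
      field_simp
      field_simp at h2
      linear_combination h2
    have key : ∀ j, ((k : K) + 1) * ∑ i, c i * lam i ^ k * ((∑ l, A i l * D w (v l)) / y i) * (A i j / y i)
        = ((k : K) + 2) * ∑ i, c i * lam i ^ (k + 1) * (A i w / y i) * (A i j / y i) := by
      intro j
      have h2 := congrArg (D w) (ih j)
      rw [map_sum, map_zero] at h2
      have h3 : ∀ i, D w (c i * lam i ^ (k + 1) * (A i j / y i)) =
          ((k : K) + 1) * (c i * lam i ^ k * ((∑ l, A i l * D w (v l)) / y i) * (A i j / y i))
          - ((k : K) + 2) * (c i * lam i ^ (k + 1) * (A i w / y i) * (A i j / y i)) := by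
        intro i
        rw [Derivation.leibniz, Derivation.leibniz, Derivation.leibniz_pow, hc, hDe, hDlam]
        simp only [smul_eq_mul, nsmul_eq_mul, Nat.add_sub_cancel]
        push_cast
        ring
      rw [Finset.sum_congr rfl (fun i _ => h3 i), Finset.sum_sub_distrib, ← Finset.mul_sum,
        ← Finset.mul_sum] at h2
      linear_combination h2
    -- pair with v
    have hL : ∑ j, v j * ∑ i, c i * lam i ^ k * ((∑ l, A i l * D w (v l)) / y i) * (A i j / y i) = 0 := by
      have : ∑ j, v j * ∑ i, c i * lam i ^ k * ((∑ l, A i l * D w (v l)) / y i) * (A i j / y i)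
          = ∑ l, D w (v l) * ∑ i, c i * lam i ^ (k + 1) * (A i l / y i) := by
        have e1 : ∑ j, v j * ∑ i, c i * lam i ^ k * ((∑ l, A i l * D w (v l)) / y i) * (A i j / y i)
          = ∑ i, c i * lam i ^ k * ((∑ l, A i l * D w (v l)) / y i) * lam i := by
          simp only [Finset.mul_sum]
          rw [Finset.sum_comm]
          refine Finset.sum_congr rfl fun i _ => ?_
          simp only [hlam, Finset.sum_div, Finset.mul_sum]
          refine Finset.sum_congr rfl fun j _ => ?_
          ring
        rw [e1]
        simp only [Finset.mul_sum]
        rw [Finset.sum_comm]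
        refine Finset.sum_congr rfl fun i _ => ?_
        rw [Finset.sum_div, Finset.mul_sum, Finset.sum_mul]
        refine Finset.sum_congr rfl fun j _ => ?_
        ring
      rw [this]
      exact Finset.sum_eq_zero fun l _ => by rw [ih l, mul_zero]
    have hR : ∑ j, v j * ∑ i, c i * lam i ^ (k + 1) * (A i w / y i) * (A i j / y i) =
        ∑ i, c i * lam i ^ (k + 1 + 1) * (A i w / y i) := by
      simp only [Finset.mul_sum]
      rw [Finset.sum_comm]
      refine Finset.sum_congr rfl fun i _ => ?_
      have : lam i ^ (k + 1 + 1) = lam i ^ (k+1) * ∑ j, A i j * v j / y i := by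
        rw [pow_succ, ← Finset.sum_div]
      rw [this, Finset.mul_sum, Finset.mul_sum, Finset.sum_mul]
      refine Finset.sum_congr rfl fun j _ => ?_
      ring
    have hk : ((k : K) + 2) ≠ 0 := by
      exact_mod_cast (by omega : k + 2 ≠ 0)
    have h4 : ((k : K) + 2) * ∑ i, c i * lam i ^ (k + 1 + 1) * (A i w / y i) = 0 := by
      rw [← hR, Finset.mul_sum]
      calc _ = ∑ j, v j * (((k : K) + 2) * ∑ i, c i * lam i ^ (k + 1) * (A i w / y i) * (A i j / y i)) :=
            Finset.sum_congr rfl fun j _ => by ring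
        _ = ((k : K) + 1) * ∑ j, v j * ∑ i, c i * lam i ^ k * ((∑ l, A i l * D w (v l)) / y i) * (A i j / y i) := by
            rw [Finset.mul_sum]
            refine Finset.sum_congr rfl fun j _ => ?_
            rw [← key j]; ring
        _ = 0 := by rw [hL, mul_zero]
    exact (mul_eq_zero.mp h4).resolve_left hk

theorem group_power_sums {K ι : Type*} [Field K] [Fintype ι] [DecidableEq K]
    (lam e : ι → K) (h : ∀ k : ℕ, ∑ i, lam i ^ (k + 1) * e i = 0) (μ : K) (hμ : μ ≠ 0) :
    ∑ i ∈ Finset.univ.filter (fun i => lam i = μ), e i = 0 := by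
  have hp : ∀ p : Polynomial K, ∑ i, lam i * p.eval (lam i) * e i = 0 := by
    intro p
    induction p using Polynomial.induction_on' with
    | add p q hp hq =>
      simp only [Polynomial.eval_add, mul_add, add_mul, Finset.sum_add_distrib, hp, hq, add_zero]
    | monomial n a =>
      have := h n
      simp only [Polynomial.eval_monomial]
      calc _ = a * ∑ i, lam i ^ (n + 1) * e i := by
            rw [Finset.mul_sum]; exact Finset.sum_congr rfl fun i _ => by ring
        _ = 0 := by rw [this, mul_zero]
  let S := (Finset.univ.image lam).erase μ
  let p : Polynomial K := ∏ s ∈ S, (Polynomial.X - Polynomial.C s)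
  have hpμ : p.eval μ ≠ 0 := by
    simp only [p, Polynomial.eval_prod, Polynomial.eval_sub, Polynomial.eval_X, Polynomial.eval_C]
    refine Finset.prod_ne_zero_iff.mpr fun s hs => ?_
    exact sub_ne_zero.mpr (Finset.ne_of_mem_erase hs).symm
  have h1 := hp p
  have h2 : ∑ i, lam i * p.eval (lam i) * e i =
      μ * p.eval μ * ∑ i ∈ Finset.univ.filter (fun i => lam i = μ), e i := by
    rw [Finset.mul_sum, Finset.sum_filter]
    refine Finset.sum_congr rfl fun i _ => ?_
    split_ifs with hi
    · rw [hi]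
    · have : p.eval (lam i) = 0 := by
        simp only [p, Polynomial.eval_prod, Polynomial.eval_sub, Polynomial.eval_X, Polynomial.eval_C]
        refine Finset.prod_eq_zero (i := lam i) ?_ (sub_self _)
        exact Finset.mem_erase.mpr ⟨hi, Finset.mem_image_of_mem _ (Finset.mem_univ i)⟩
      rw [this]; ring
  rw [h2] at h1
  exact (mul_eq_zero.mp h1).resolve_left (mul_ne_zero hμ hpμ)

/-- rank one perturbation with an Euler relation -/
theorem det_euler {K κ : Type*} [CommRing K] [Fintype κ] [DecidableEq κ] [Nonempty κ]
    (A : Matrix κ κ K) (x a y : κ → K) (δ c : K) (hx : A.mulVec x = δ • a) :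
    δ ^ Fintype.card κ * (c • A + Matrix.vecMulVec a y).det =
      A.det * ((δ * c) ^ (Fintype.card κ - 1) * (δ * c + x ⬝ᵥ y)) := by
  have h1 : δ • (c • A + Matrix.vecMulVec a y) =
      A * (Matrix.scalar κ (δ * c) - Matrix.vecMulVec (-x) y) := by
    rw [mul_sub, Matrix.mul_vecMulVec, Matrix.mulVec_neg, hx, Matrix.neg_vecMulVec, sub_neg_eq_add,
      Matrix.smul_vecMulVec, smul_add, smul_smul]
    congr 1
    ext i j
    simp [Matrix.scalar_apply, mul_comm]
  rw [← Matrix.det_smul, h1, Matrix.det_mul, ← Matrix.eval_charpoly, Matrix.charpoly_vecMulVec]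
  congr 1
  have hcard : Fintype.card κ = Fintype.card κ - 1 + 1 := by
    have := Fintype.card_pos (α := κ); omega
  simp only [Polynomial.eval_sub, Polynomial.eval_pow, Polynomial.eval_X, Polynomial.eval_smul,
    smul_eq_mul, neg_dotProduct]
  conv_lhs => rw [hcard]
  rw [Nat.add_sub_cancel]
  ring

/-- a rank two perturbation of a multiple of t -/
theorem dvd_det_rank_two {K κ : Type*} [CommRing K] [IsDomain K] [Fintype κ] [DecidableEq κ]
    (M : Matrix κ κ K) (U : Matrix κ (Fin 2) K) (V : Matrix (Fin 2) κ K) (t : K) (ht : t ≠ 0)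
    (m : ℕ) (hm : Fintype.card κ = m + 2) :
    t ^ m ∣ (t • M + U * V).det := by
  have h1 : (t • M + U * V).det = (Matrix.fromBlocks 1 (-V) U (t • M)).det := by
    rw [Matrix.det_fromBlocks_one₁₁, Matrix.mul_neg, sub_neg_eq_add]
  have h2 : Matrix.fromBlocks 1 (-V) U (t • M) * Matrix.fromBlocks (t • 1) 0 0 1 =
      Matrix.fromBlocks 1 0 0 (t • 1) * Matrix.fromBlocks (t • 1) (-V) U M := by
    simp [Matrix.fromBlocks_multiply]
  have h3 := congrArg Matrix.det h2
  rw [Matrix.det_mul, Matrix.det_mul, Matrix.det_fromBlocks_zero₂₁, Matrix.det_fromBlocks_zero₂₁] at h3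
  simp only [Matrix.det_smul, Matrix.det_one, mul_one, one_mul, Fintype.card_fin, hm] at h3
  rw [h1]
  refine ⟨(Matrix.fromBlocks (t • 1) (-V) U M).det, ?_⟩
  apply mul_right_cancel₀ (pow_ne_zero 2 ht)
  rw [h3]; ring

/-- The Jacobian matrix of the coefficients of `P dQ - Q dP`. -/
def pencilJac (n : ℕ) (P Q : MvPolynomial (Fin (n + 1)) ℂ) :
    Matrix (Fin (n + 1)) (Fin (n + 1)) (MvPolynomial (Fin (n + 1)) ℂ) :=
  Matrix.of fun i j => pderiv j (P * pderiv i Q - Q * pderiv i P)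

theorem pderiv_pderiv_linear {n : ℕ} {h : MvPolynomial (Fin (n + 1)) ℂ} (hh : h.IsHomogeneous 1)
    (i j : Fin (n + 1)) : pderiv j (pderiv i h) = 0 := by
  have h1 := hh.pderiv (i := i)
  rw [Nat.sub_self, ← totalDegree_zero_iff_isHomogeneous, totalDegree_eq_zero_iff_eq_C] at h1
  rw [h1, pderiv_C]

theorem linear_dvd_det {n : ℕ} (hn : 1 ≤ n) {P Q h : MvPolynomial (Fin (n + 1)) ℂ}
    (h0 : h ≠ 0) (hh : h.IsHomogeneous 1) (m : ℕ) (hm : h ^ m ∣ P) :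
    (h ^ m) ^ (n - 1) ∣ (pencilJac n P Q).det := by
  obtain ⟨u, rfl⟩ := hm
  let b : Fin (n + 1) → MvPolynomial (Fin (n + 1)) ℂ := fun i => u * pderiv i Q - Q * pderiv i u
  let c : MvPolynomial (Fin (n + 1)) ℂ := - ((m : MvPolynomial (Fin (n + 1)) ℂ) * h ^ (m - 1) * u * Q)
  have hW : pencilJac n (h ^ m * u) Q = (h ^ m) • (Matrix.of fun i j => pderiv j (b i)) +
      (Matrix.of fun i (k : Fin 2) => ![b i, pderiv i h] k) *
      (Matrix.of fun (k : Fin 2) j => ![pderiv j (h ^ m), pderiv j c] k) := by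
    ext1 i j
    have h1 : h ^ m * u * pderiv i Q - Q * pderiv i (h ^ m * u) = h ^ m * b i + pderiv i h * c := by
      simp only [b, c, Derivation.leibniz, Derivation.leibniz_pow, smul_eq_mul, nsmul_eq_mul]
      ring
    simp only [pencilJac, Matrix.of_apply, h1, Matrix.add_apply, Matrix.smul_apply, Matrix.mul_apply,
      Fin.sum_univ_two, Matrix.cons_val_zero, Matrix.cons_val_one, smul_eq_mul, map_add]
    rw [Derivation.leibniz, Derivation.leibniz _ (pderiv i h), pderiv_pderiv_linear hh]
    simp only [smul_eq_mul]
    ring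
  rw [hW]
  exact dvd_det_rank_two _ _ _ _ (pow_ne_zero _ h0) _ (by simp; omega)

theorem general_dvd_det {n d ε : ℕ} (hd : 1 ≤ d) (hε : 1 ≤ ε) {P Q h : MvPolynomial (Fin (n + 1)) ℂ}
    (hP : P.IsHomogeneous d) (hQ : Q.IsHomogeneous d) (hP0 : P ≠ 0)
    (h0 : h ≠ 0) (hh : h.IsHomogeneous ε) (k : ℕ) (hm : h ^ (k + 1) ∣ P) :
    (h ^ k) ^ (n + 1) ∣ (pencilJac n P Q).det := by
  have hdeg : (k + 1) * ε ≤ d := by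
    have h1 := totalDegree_le_of_dvd_of_isDomain hm hP0
    rw [hP.totalDegree hP0, (hh.pow (k + 1)).totalDegree (pow_ne_zero _ h0)] at h1
    linarith
  obtain ⟨u, hu⟩ := hm
  let a : Fin (n + 1) → MvPolynomial (Fin (n + 1)) ℂ := fun i =>
    h * (u * pderiv i Q - Q * pderiv i u) - ((k : MvPolynomial (Fin (n + 1)) ℂ) + 1) * u * Q * pderiv i h
  have hω : ∀ i, P * pderiv i Q - Q * pderiv i P = h ^ k * a i := by
    intro i
    simp only [a, hu, Derivation.leibniz, Derivation.leibniz_pow, smul_eq_mul, nsmul_eq_mul,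
      Nat.add_sub_cancel]
    push_cast
    ring
  have hke : k * ε + ε ≤ d := by linarith
  have hωhom : ∀ i, (P * pderiv i Q - Q * pderiv i P).IsHomogeneous (2 * d - 1) := by
    intro i
    have e : d + (d - 1) = 2 * d - 1 := by omega
    have h1 := hP.mul (hQ.pderiv (i := i))
    have h2 := hQ.mul (hP.pderiv (i := i))
    rw [e] at h1 h2
    exact h1.sub h2
  let δ : ℕ := 2 * d - 1 - k * ε
  have hδ : δ + k * ε = 2 * d - 1 := by simp only [δ]; omega
  have hδ0 : δ ≠ 0 := by simp only [δ]; omega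
  let A : Matrix (Fin (n + 1)) (Fin (n + 1)) (MvPolynomial (Fin (n + 1)) ℂ) :=
    Matrix.of fun i j => pderiv j (a i)
  have hEk := (hh.pow k).sum_X_mul_pderiv
  have hA : A.mulVec (fun j => X j) = (δ : MvPolynomial (Fin (n + 1)) ℂ) • a := by
    ext1 i
    have h1 := (hωhom i).sum_X_mul_pderiv
    rw [hω i, ← hδ] at h1
    have h2 : ∑ j, X j * pderiv j (h ^ k * a i) =
        h ^ k * (∑ j, X j * pderiv j (a i)) + a i * ∑ j, X j * pderiv j (h ^ k) := by
      rw [Finset.mul_sum, Finset.mul_sum, ← Finset.sum_add_distrib]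
      refine Finset.sum_congr rfl fun j _ => ?_
      rw [Derivation.leibniz]; simp only [smul_eq_mul]; ring
    rw [h2, hEk] at h1
    have h3 : h ^ k * (∑ j, X j * pderiv j (a i)) = h ^ k * (δ * a i) := by
      simp only [nsmul_eq_mul] at h1
      push_cast at h1
      linear_combination h1
    have h4 := mul_left_cancel₀ (pow_ne_zero k h0) h3
    simp only [Matrix.mulVec, dotProduct, A, Matrix.of_apply, Pi.smul_apply, smul_eq_mul]
    rw [← h4]
    exact Finset.sum_congr rfl fun j _ => mul_comm _ _
  have hW : pencilJac n P Q = (h ^ k) • A + Matrix.vecMulVec a (fun j => pderiv j (h ^ k)) := by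
    ext1 i j
    simp only [pencilJac, Matrix.of_apply, hω, A, Matrix.add_apply, Matrix.smul_apply,
      Matrix.vecMulVec_apply, smul_eq_mul]
    rw [Derivation.leibniz]
    simp only [smul_eq_mul]
  have key := det_euler A (fun j => X j) a (fun j => pderiv j (h ^ k)) δ (h ^ k) hA
  rw [← hW] at key
  have hxy : (fun j => X j) ⬝ᵥ (fun j => pderiv j (h ^ k)) = (ε * k) • (h ^ k) := hEk
  rw [hxy] at key
  simp only [Fintype.card_fin, Nat.add_sub_cancel] at key
  have hunit : IsUnit ((δ : MvPolynomial (Fin (n + 1)) ℂ) ^ (n + 1)) := by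
    apply IsUnit.pow
    have : (δ : MvPolynomial (Fin (n + 1)) ℂ) = C (δ : ℂ) := by simp
    rw [this]
    exact (IsUnit.mk0 _ (Nat.cast_ne_zero.mpr hδ0)).map C
  rw [← hunit.dvd_mul_left, key]
  refine ⟨A.det * (δ ^ n * (δ + (ε * k : ℕ))), ?_⟩
  simp only [nsmul_eq_mul]
  push_cast
  ring

theorem det_homogeneous {n d : ℕ} (hd : 1 ≤ d) {P Q : MvPolynomial (Fin (n + 1)) ℂ}
    (hP : P.IsHomogeneous d) (hQ : Q.IsHomogeneous d) :
    (pencilJac n P Q).det.IsHomogeneous ((n + 1) * (2 * d - 2)) := by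
  have hent : ∀ i j, (pencilJac n P Q i j).IsHomogeneous (2 * d - 2) := by
    intro i j
    have e : d + (d - 1) = 2 * d - 1 := by omega
    have h1 := hP.mul (hQ.pderiv (i := i))
    have h2 := hQ.mul (hP.pderiv (i := i))
    rw [e] at h1 h2
    have h3 := (h1.sub h2).pderiv (i := j)
    have e2 : 2 * d - 1 - 1 = 2 * d - 2 := by omega
    rwa [e2] at h3
  rw [Matrix.det_apply]
  refine IsHomogeneous.sum _ _ _ fun σ _ => ?_
  have h1 := IsHomogeneous.prod Finset.univ (fun i => pencilJac n P Q (σ i) i) (fun _ => 2 * d - 2)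
    (fun i _ => hent _ _)
  simp only [Finset.sum_const, Finset.card_univ, Fintype.card_fin, smul_eq_mul] at h1
  rcases Int.units_eq_one_or (Equiv.Perm.sign σ) with h | h
  · rw [h, one_smul]; exact h1
  · rw [h, Units.neg_smul, one_smul]; exact h1.neg

theorem det_swap {n : ℕ} (P Q : MvPolynomial (Fin (n + 1)) ℂ) :
    (pencilJac n Q P).det = (-1) ^ (n + 1) * (pencilJac n P Q).det := by
  have : pencilJac n Q P = (-1 : MvPolynomial (Fin (n + 1)) ℂ) • pencilJac n P Q := by
    ext1 i j
    simp only [pencilJac, Matrix.of_apply, Matrix.smul_apply, smul_eq_mul, neg_mul, one_mul, ← map_neg]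
    congr 1; ring
  rw [this, Matrix.det_smul, Fintype.card_fin]

theorem det_member {n : ℕ} (P Q : MvPolynomial (Fin (n + 1)) ℂ) (a b : ℂ) :
    (pencilJac n (C a * P + C b * Q) P).det = (- C b) ^ (n + 1) * (pencilJac n P Q).det := by
  have : pencilJac n (C a * P + C b * Q) P = (- C b : MvPolynomial (Fin (n + 1)) ℂ) • pencilJac n P Q := by
    ext1 i j
    simp only [pencilJac, Matrix.of_apply, Matrix.smul_apply, smul_eq_mul]
    have h1 : (C a * P + C b * Q) * pderiv i P - P * pderiv i (C a * P + C b * Q) =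
      C (-b) * (P * pderiv i Q - Q * pderiv i P) := by
      simp only [map_add, pderiv_C_mul, map_neg]
      ring
    rw [h1, pderiv_C_mul, map_neg]
  rw [this, Matrix.det_smul, Fintype.card_fin]

theorem degree_zero_of_dvd_pderiv {n a : ℕ} {A : MvPolynomial (Fin (n + 1)) ℂ} (hA : A.IsHomogeneous a)
    (hA0 : A ≠ 0) (h : ∀ j, A ∣ pderiv j A) : a = 0 := by
  by_contra ha
  have hz : ∀ j, pderiv j A = 0 := by
    intro j
    by_contra hj
    have h1 := totalDegree_le_of_dvd_of_isDomain (h j) hj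
    rw [hA.totalDegree hA0, hA.pderiv.totalDegree hj] at h1
    omega
  have := hA.sum_X_mul_pderiv
  simp only [hz, mul_zero, Finset.sum_const_zero, nsmul_eq_mul] at this
  rcases mul_eq_zero.mp this.symm with h | h
  · exact ha (by exact_mod_cast h)
  · exact hA0 h

theorem derivation_prod {K ι : Type*} [Field K] (D : Derivation ℤ K K) (s : Finset ι) (y : ι → K)
    (hy : ∀ i, y i ≠ 0) : D (∏ i ∈ s, y i) = (∏ i ∈ s, y i) * ∑ i ∈ s, D (y i) / y i := by
  classical
  induction s using Finset.induction_on with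
  | empty => simp
  | insert i s hi ih =>
    rw [Finset.prod_insert hi, Finset.sum_insert hi, Derivation.leibniz, ih]
    have := hy i
    simp only [smul_eq_mul]
    field_simp
    ring

theorem jac_det_ne_zero {n p q d : ℕ} (hd : 1 ≤ d) (K : Type*) [Field K] [CharZero K]
    [Algebra (MvPolynomial (Fin (n + 1)) ℂ) K] [IsFractionRing (MvPolynomial (Fin (n + 1)) ℂ) K]
    (f : Fin p → MvPolynomial (Fin (n + 1)) ℂ) (g : Fin q → MvPolynomial (Fin (n + 1)) ℂ)
    (hf0 : ∀ i, f i ≠ 0) (hf : ∀ i, (f i).IsHomogeneous 1)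
    (hg0 : ∀ i, g i ≠ 0) (hg : ∀ i, (g i).IsHomogeneous 1)
    (hF : (∏ i, f i).IsHomogeneous d) (hG : (∏ i, g i).IsHomogeneous d)
    (hcop : IsRelPrime (∏ i, f i) (∏ i, g i))
    (hspan : ∀ v : Fin (n + 1) → K,
      (∀ i, ∑ l, algebraMap (MvPolynomial (Fin (n + 1)) ℂ) K (pderiv l (f i)) * v l = 0) →
      (∀ i, ∑ l, algebraMap (MvPolynomial (Fin (n + 1)) ℂ) K (pderiv l (g i)) * v l = 0) → v = 0) :
    (pencilJac n (∏ i, f i) (∏ i, g i)).det ≠ 0 := by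
  classical
  let R := MvPolynomial (Fin (n + 1)) ℂ
  let am : R →+* K := algebraMap R K
  have hinj : Function.Injective am := IsFractionRing.injective R K
  have hext : ∀ j : Fin (n + 1), ∃ D : Derivation ℤ K K, ∀ x : R, D (am x) = am (pderiv j x) := by
    intro j
    exact exists_extend_derivation ((pderiv j : Derivation ℂ R R).restrictScalars ℤ)
  choose D hD using hext
  let al : Fin p ⊕ Fin q → R := Sum.elim f g
  have hal0 : ∀ i, al i ≠ 0 := by rintro (i | i) <;> simp [al, hf0, hg0]
  have hal : ∀ i, (al i).IsHomogeneous 1 := by rintro (i | i) <;> simp [al, hf, hg]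
  let c : Fin p ⊕ Fin q → K := Sum.elim (fun _ => 1) (fun _ => -1)
  have hc : ∀ i l, D l (c i) = 0 := by rintro (i | i) l <;> simp [c]
  let A : Fin p ⊕ Fin q → Fin (n + 1) → K := fun i j => am (pderiv j (al i))
  have hA : ∀ i j l, D l (A i j) = 0 := by
    intro i j l
    simp only [A, hD, pderiv_pderiv_linear (hal i), map_zero]
  let y : Fin p ⊕ Fin q → K := fun i => am (al i)
  have hy : ∀ i, y i ≠ 0 := fun i => (map_ne_zero_iff am hinj).mpr (hal0 i)
  have hDy : ∀ i l, D l (y i) = A i l := fun i l => hD l (al i)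
  -- logarithmic derivatives
  have hlog : ∀ (s : Finset (Fin p ⊕ Fin q)) j, ∑ i ∈ s, c i * (A i j / y i) =
      am (pderiv j (∏ i ∈ s.toLeft, f i)) / am (∏ i ∈ s.toLeft, f i) -
      am (pderiv j (∏ i ∈ s.toRight, g i)) / am (∏ i ∈ s.toRight, g i) := by
    intro s j
    have hl : am (∏ i ∈ s.toLeft, f i) = ∏ i ∈ s.toLeft, y (Sum.inl i) := map_prod am _ _
    have hr : am (∏ i ∈ s.toRight, g i) = ∏ i ∈ s.toRight, y (Sum.inr i) := map_prod am _ _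
    rw [Finset.sum_sum_eq_sum_toLeft_add_sum_toRight, ← hD, ← hD, hl, hr,
      derivation_prod _ _ _ (fun i => hy (Sum.inl i)), derivation_prod _ _ _ (fun i => hy (Sum.inr i))]
    have h1 : ∏ i ∈ s.toLeft, y (Sum.inl i) ≠ 0 := Finset.prod_ne_zero_iff.mpr fun i _ => hy _
    have h2 : ∏ i ∈ s.toRight, y (Sum.inr i) ≠ 0 := Finset.prod_ne_zero_iff.mpr fun i _ => hy _
    rw [mul_div_cancel_left₀ _ h1, mul_div_cancel_left₀ _ h2]
    simp only [c, Sum.elim_inl, Sum.elim_inr, one_mul, neg_mul, Finset.sum_neg_distrib, hDy,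
      sub_eq_add_neg]
  have hempty : ∀ s : Finset (Fin p ⊕ Fin q), (∀ j, ∑ i ∈ s, c i * (A i j / y i) = 0) → s = ∅ := by
    intro s hs
    let P := ∏ i ∈ s.toLeft, f i
    let Q := ∏ i ∈ s.toRight, g i
    have hP0 : P ≠ 0 := Finset.prod_ne_zero_iff.mpr fun i _ => hf0 i
    have hQ0 : Q ≠ 0 := Finset.prod_ne_zero_iff.mpr fun i _ => hg0 i
    have hPQ : IsRelPrime P Q :=
      (hcop.of_dvd_left (Finset.prod_dvd_prod_of_subset _ _ _ (Finset.subset_univ _))).of_dvd_right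
        (Finset.prod_dvd_prod_of_subset _ _ _ (Finset.subset_univ _))
    have hPh : P.IsHomogeneous s.toLeft.card := by
      simpa using IsHomogeneous.prod s.toLeft f (fun _ => 1) (fun i _ => hf i)
    have hQh : Q.IsHomogeneous s.toRight.card := by
      simpa using IsHomogeneous.prod s.toRight g (fun _ => 1) (fun i _ => hg i)
    have hrel : ∀ j, Q * pderiv j P = P * pderiv j Q := by
      intro j
      have h1 := hs j
      rw [hlog] at h1
      have hP1 : am P ≠ 0 := (map_ne_zero_iff am hinj).mpr hP0
      have hQ1 : am Q ≠ 0 := (map_ne_zero_iff am hinj).mpr hQ0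
      change am (pderiv j P) / am P - am (pderiv j Q) / am Q = 0 at h1
      apply hinj
      rw [map_mul, map_mul]
      field_simp at h1
      linear_combination h1
    have e1 := degree_zero_of_dvd_pderiv hPh hP0 fun j =>
      hPQ.dvd_of_dvd_mul_left ⟨_, hrel j⟩
    have e2 := degree_zero_of_dvd_pderiv hQh hQ0 fun j =>
      hPQ.symm.dvd_of_dvd_mul_left ⟨_, (hrel j).symm⟩
    rw [← Finset.card_eq_zero, ← Finset.card_toLeft_add_card_toRight, e1, e2]
  let H : Matrix (Fin (n + 1)) (Fin (n + 1)) K :=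
    Matrix.of fun i j => ∑ k, c k * (A k j / y k) * (A k i / y k)
  have hH : H.det ≠ 0 := by
    intro h0
    obtain ⟨v, hv0, hv⟩ := Matrix.exists_mulVec_eq_zero_iff.mpr h0
    have hv' : ∀ j, ∑ i, c i * ((∑ l, A i l * v l) / y i) * (A i j / y i) = 0 := by
      intro j
      have h1 := congrFun hv j
      simp only [Matrix.mulVec, dotProduct, H, Matrix.of_apply, Pi.zero_apply] at h1
      rw [← h1]
      simp only [Finset.sum_mul, Finset.mul_sum, Finset.sum_div]
      rw [Finset.sum_comm]
      refine Finset.sum_congr rfl fun l _ => Finset.sum_congr rfl fun i _ => ?_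
      ring
    have hps := kernel_power_sums D A hA y hy hDy c hc v hv'
    by_cases hall : ∀ i, ∑ l, A i l * v l = 0
    · exact hv0 (hspan v (fun i => hall (Sum.inl i)) (fun i => hall (Sum.inr i)))
    · push Not at hall
      obtain ⟨i0, hi0⟩ := hall
      have hgrp := fun j => group_power_sums (fun i => (∑ l, A i l * v l) / y i)
        (fun i => c i * (A i j / y i)) (fun k => by
          rw [← hps k j]
          refine Finset.sum_congr rfl fun i _ => ?_
          ring) _ (div_ne_zero hi0 (hy i0))
      have h1 := hempty _ hgrp
      have h2 : i0 ∈ Finset.univ.filter (fun i => (∑ l, A i l * v l) / y i =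
        (∑ l, A i0 l * v l) / y i0) := by simp
      rw [h1] at h2
      simp at h2
  -- relate to the Jacobian
  let F : R := ∏ i, f i
  let G : R := ∏ i, g i
  have hF0 : am F ≠ 0 := (map_ne_zero_iff am hinj).mpr (Finset.prod_ne_zero_iff.mpr fun i _ => hf0 i)
  have hG0 : am G ≠ 0 := (map_ne_zero_iff am hinj).mpr (Finset.prod_ne_zero_iff.mpr fun i _ => hg0 i)
  let η : Fin (n + 1) → K := fun j => ∑ i, c i * (A i j / y i)
  have hη : ∀ j, am (F * pderiv j G - G * pderiv j F) = - (am (F * G) * η j) := by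
    intro j
    have h1 := hlog Finset.univ j
    have eL : (Finset.univ : Finset (Fin p ⊕ Fin q)).toLeft = Finset.univ := by ext; simp
    have eR : (Finset.univ : Finset (Fin p ⊕ Fin q)).toRight = Finset.univ := by ext; simp
    rw [eL, eR] at h1
    change η j = am (pderiv j F) / am F - am (pderiv j G) / am G at h1
    rw [h1]
    simp only [map_sub, map_mul]
    field_simp
    ring
  have hDη : ∀ i j, D j (η i) = - H i j := by
    intro i j
    simp only [η, H, Matrix.of_apply, map_sum, ← Finset.sum_neg_distrib]
    refine Finset.sum_congr rfl fun k _ => ?_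
    have h1 : (A k i / y k) * y k = A k i := by field_simp [hy k]
    have h2 := congrArg (D j) h1
    rw [Derivation.leibniz, hA, hDy] at h2
    simp only [smul_eq_mul] at h2
    have h3 : D j (A k i / y k) = - (A k i / y k) * (A k j / y k) := by
      have := hy k
      field_simp
      field_simp at h2
      linear_combination h2
    rw [Derivation.leibniz, hc, h3]
    simp only [smul_eq_mul]
    ring
  have hFGh : (F * G).IsHomogeneous (d + d) := hF.mul hG
  have hW : (am.mapMatrix (pencilJac n F G)) =
      am (F * G) • H + Matrix.vecMulVec (-η) (fun j => am (pderiv j (F * G))) := by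
    ext1 i j
    simp only [RingHom.mapMatrix_apply, Matrix.map_apply, pencilJac, Matrix.of_apply]
    rw [← hD, hη, map_neg, Derivation.leibniz, hDη, hD]
    simp only [Matrix.add_apply, Matrix.smul_apply, Matrix.vecMulVec_apply, smul_eq_mul, Pi.neg_apply]
    ring
  have hEy : ∀ k, ∑ j, A k j * am (X j) = y k := by
    intro k
    have h1 := congrArg am (hal k).sum_X_mul_pderiv
    rw [one_smul, map_sum] at h1
    simp only [y, A]
    rw [← h1]
    refine Finset.sum_congr rfl fun j _ => ?_
    rw [map_mul, mul_comm]
  have hHx : H.mulVec (fun j => am (X j)) = (-1 : K) • (-η) := by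
    ext1 i
    simp only [Matrix.mulVec, dotProduct, H, Matrix.of_apply, Pi.smul_apply, Pi.neg_apply, smul_eq_mul, η,
      neg_mul, one_mul, neg_neg, Finset.sum_mul]
    rw [Finset.sum_comm]
    refine Finset.sum_congr rfl fun k _ => ?_
    calc _ = (c k * (A k i / y k)) * ((∑ j, A k j * am (X j)) / y k) := by
          rw [Finset.sum_div, Finset.mul_sum]
          exact Finset.sum_congr rfl fun j _ => by ring
      _ = _ := by rw [hEy, div_self (hy k), mul_one]
  have key := det_euler H (fun j => am (X j)) (-η) (fun j => am (pderiv j (F * G))) (-1) (am (F * G)) hHx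
  rw [← hW, ← RingHom.map_det] at key
  have hxy : (fun j => am (X j)) ⬝ᵥ (fun j => am (pderiv j (F * G))) = ((d + d : ℕ) : K) * am (F * G) := by
    have h1 := congrArg am hFGh.sum_X_mul_pderiv
    rw [map_sum, map_nsmul, nsmul_eq_mul] at h1
    rw [← h1]
    simp only [dotProduct, map_mul]
  rw [hxy] at key
  intro h0
  change (pencilJac n F G).det = 0 at h0
  rw [h0, map_zero, mul_zero] at key
  have hFG0 : am (F * G) ≠ 0 := by rw [map_mul]; exact mul_ne_zero hF0 hG0
  have h5 : (-1 : K) * am (F * G) + ((d + d : ℕ) : K) * am (F * G) ≠ 0 := by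
    have : (-1 : K) * am (F * G) + ((d + d : ℕ) : K) * am (F * G) = ((d + d - 1 : ℕ) : K) * am (F * G) := by
      rw [Nat.cast_sub (by omega)]; push_cast; ring
    rw [this]
    exact mul_ne_zero (Nat.cast_ne_zero.mpr (by omega)) hFG0
  exact (mul_ne_zero hH (mul_ne_zero (pow_ne_zero _ (mul_ne_zero (by simp) hFG0)) h5)) key.symm

theorem pow_dvd_of_primes {R : Type*} [CommRing R] [IsDomain R] [UniqueFactorizationMonoid R]
    {P b : R} (hP : P ≠ 0) (M : ℕ)
    (h : ∀ p, Prime p → ∀ m, p ^ (m + 1) ∣ P → (p ^ (m + 1)) ^ M ∣ b) : P ^ M ∣ b := by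
  rw [UniqueFactorizationMonoid.dvd_iff_emultiplicity_le (pow_ne_zero M hP)]
  intro p hp
  have hfin : FiniteMultiplicity p P := FiniteMultiplicity.of_not_isUnit hp.not_unit hP
  rw [emultiplicity_pow hp, hfin.emultiplicity_eq_multiplicity]
  have h1 : (p ^ multiplicity p P) ^ M ∣ b := by
    rcases hm : multiplicity p P with _ | m
    · simp
    · apply h p hp m
      rw [← hm]
      exact pow_multiplicity_dvd p P
  rw [← pow_mul] at h1
  have h2 := le_emultiplicity_of_pow_dvd h1
  rw [mul_comm] at h2
  exact_mod_cast h2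

theorem linear_irreducible {n : ℕ} {h : MvPolynomial (Fin (n + 1)) ℂ} (h0 : h ≠ 0)
    (hh : h.IsHomogeneous 1) : Irreducible h := by
  apply irreducible_of_totalDegree_eq_one (hh.totalDegree h0)
  intro x hx
  rw [isUnit_iff_ne_zero]
  rintro rfl
  apply h0
  ext i
  simpa using hx i

/-- product of linear forms: its power divides the determinant -/
theorem linear_prod_pow_dvd {n r : ℕ} (hn : 1 ≤ n) {P Q : MvPolynomial (Fin (n + 1)) ℂ}
    (f : Fin r → MvPolynomial (Fin (n + 1)) ℂ) (hf0 : ∀ i, f i ≠ 0)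
    (hf : ∀ i, (f i).IsHomogeneous 1) (hdvd : (∏ i, f i) ∣ P) :
    (∏ i, f i) ^ (n - 1) ∣ (pencilJac n P Q).det := by
  apply pow_dvd_of_primes (Finset.prod_ne_zero_iff.mpr fun i _ => hf0 i)
  intro p hp m hm
  have h1 : p ∣ ∏ i, f i := (dvd_pow_self p (Nat.succ_ne_zero m)).trans hm
  obtain ⟨i, -, hi⟩ := (hp.dvd_finsetProd_iff _).mp h1
  have hass : Associated p (f i) :=
    hp.irreducible.associated_of_dvd (linear_irreducible (hf0 i) (hf i)) hi
  have h2 : (f i) ^ (m + 1) ∣ P := (hass.symm.pow_pow.dvd.trans hm).trans hdvd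
  exact (hass.pow_pow.pow_pow.dvd).trans (linear_dvd_det hn (hf0 i) (hf i) (m + 1) h2)

theorem nonreduced_pow_dvd {n d s : ℕ} (hd : 1 ≤ d) {P Q : MvPolynomial (Fin (n + 1)) ℂ}
    (hP : P.IsHomogeneous d) (hQ : Q.IsHomogeneous d) (hP0 : P ≠ 0)
    (g : Fin s → MvPolynomial (Fin (n + 1)) ℂ)
    (hgirr : ∀ j, Irreducible (g j))
    (dg : Fin s → ℕ) (hdg : ∀ j, 2 ≤ dg j)
    (hghom : ∀ j, (g j).IsHomogeneous (dg j))
    (e : Fin s → ℕ) (he : ∀ j, 2 ≤ e j) (hdvd : (∏ j, g j ^ e j) ∣ P) :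
    (∏ j, g j ^ e j) ^ (n + 1) ∣ (pencilJac n P Q).det ^ 2 := by
  apply pow_dvd_of_primes (Finset.prod_ne_zero_iff.mpr fun j _ => pow_ne_zero _ (hgirr j).ne_zero)
  intro p hp m hm
  have h1 : p ∣ ∏ j, g j ^ e j := (dvd_pow_self p (Nat.succ_ne_zero m)).trans hm
  obtain ⟨j, -, hj⟩ := (hp.dvd_finsetProd_iff _).mp h1
  have hass : Associated p (g j) :=
    hp.irreducible.associated_of_dvd (hgirr j) (hp.dvd_of_dvd_pow hj)
  have hdg1 : 1 ≤ dg j := le_trans (by norm_num) (hdg j)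
  have hgen := general_dvd_det hd hdg1 hP hQ hP0 (hgirr j).ne_zero (hghom j)
  refine (hass.pow_pow.pow_pow.dvd).trans ?_
  rcases m with _ | m
  · have h2a : g j ^ (1 + 1) ∣ g j ^ e j := pow_dvd_pow _ (he j)
    have h2b : g j ^ e j ∣ ∏ j, g j ^ e j :=
      Finset.dvd_prod_of_mem (fun j => g j ^ e j) (Finset.mem_univ j)
    have h2 : g j ^ (1 + 1) ∣ P := (h2a.trans h2b).trans hdvd
    rw [zero_add]
    exact (hgen 1 h2).trans (dvd_pow_self _ two_ne_zero)
  · have h2 : (g j) ^ (m + 1 + 1) ∣ P := (hass.symm.pow_pow.dvd.trans hm).trans hdvd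
    have h3 := pow_dvd_pow_of_dvd (hgen (m + 1) h2) 2
    refine dvd_trans ?_ h3
    rw [← pow_mul, ← pow_mul, ← pow_mul]
    apply pow_dvd_pow
    nlinarith

theorem dvd_of_dvd_neg_pow {n : ℕ} {t D : MvPolynomial (Fin (n + 1)) ℂ} {u : MvPolynomial (Fin (n + 1)) ℂ}
    (hu : IsUnit u) (k : ℕ) (h : t ∣ u ^ k * D) : t ∣ D :=
  (hu.pow k).dvd_mul_left.mp h

theorem exists_fin_factors {n : ℕ} {P : MvPolynomial (Fin (n + 1)) ℂ} (h : CompletelyReducible n P) :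
    ∃ (p : ℕ) (f : Fin p → MvPolynomial (Fin (n + 1)) ℂ), (∀ i, IsLinearForm n (f i)) ∧
      P = ∏ i, f i := by
  obtain ⟨s, hs, rfl⟩ := h
  refine ⟨s.toList.length, fun i => s.toList[i.1], fun i => hs _ ?_, ?_⟩
  · rw [← Multiset.mem_toList]
    exact List.getElem_mem _
  · rw [Fin.prod_univ_getElem, Multiset.prod_toList]

theorem pairing_zero_of_dvd {n p : ℕ} {K : Type*} [Field K]
    [Algebra (MvPolynomial (Fin (n + 1)) ℂ) K]
    (f : Fin p → MvPolynomial (Fin (n + 1)) ℂ) (hf : ∀ i, IsLinearForm n (f i))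
    (v : Fin (n + 1) → K)
    (hv : ∀ i, ∑ l, algebraMap (MvPolynomial (Fin (n + 1)) ℂ) K (pderiv l (f i)) * v l = 0)
    (α : MvPolynomial (Fin (n + 1)) ℂ) (hα : IsLinearForm n α) (hd : α ∣ ∏ i, f i) :
    ∑ l, algebraMap (MvPolynomial (Fin (n + 1)) ℂ) K (pderiv l α) * v l = 0 := by
  have hirr := linear_irreducible hα.1 hα.2
  obtain ⟨i, -, hi⟩ := (hirr.prime.dvd_finsetProd_iff _).mp hd
  obtain ⟨u, hu⟩ := hirr.associated_of_dvd (linear_irreducible (hf i).1 (hf i).2) hi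
  obtain ⟨c, hc, hcu⟩ := MvPolynomial.isUnit_iff_eq_C_of_isReduced.mp u⁻¹.isUnit
  have h1 : α = C c * f i := by
    rw [← hu, ← hcu, mul_comm, mul_assoc, Units.mul_inv, mul_one]
  rw [h1]
  simp only [pderiv_C_mul, map_mul, mul_assoc]
  rw [← Finset.mul_sum, hv, mul_zero]

/-- An essential pencil on ℙⁿ with irreducible generic fiber, two completely reducible
fibers, and a further fiber that is a product of linear forms and non-trivial powers of
irreducible polynomials of degree at least two can exist only for n ≤ 6. -/
theorem essential_pencil_dimension_bound
    (n d : ℕ) (hn : 2 ≤ n) (hd : 1 ≤ d)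
    (F G : MvPolynomial (Fin (n + 1)) ℂ)
    (hF : F.IsHomogeneous d) (hG : G.IsHomogeneous d)
    (hFcr : CompletelyReducible n F) (hGcr : CompletelyReducible n G)
    (hcop : RelPrime n F G)
    (hgen : GenericFiberIrreducible n F G)
    -- the pencil is essential
    (hess : ∀ i : Fin (n + 1),
      X i ∈ Submodule.span ℂ
        {α : MvPolynomial (Fin (n + 1)) ℂ | IsLinearForm n α ∧ (α ∣ F ∨ α ∣ G)})
    -- a member K = aF + bG distinct from F and G, a product of linear forms and
    -- non-trivial powers of irreducible polynomials of degree at least two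
    (a b : ℂ) (ha : a ≠ 0) (hb : b ≠ 0)
    (K : MvPolynomial (Fin (n + 1)) ℂ)
    (hK : K = C a * F + C b * G)
    (r s : ℕ)
    (ℓ : Fin r → MvPolynomial (Fin (n + 1)) ℂ)
    (hℓ : ∀ i, IsLinearForm n (ℓ i))
    (g : Fin s → MvPolynomial (Fin (n + 1)) ℂ)
    (hgirr : ∀ j, Irreducible (g j))
    (dg : Fin s → ℕ) (hdg : ∀ j, 2 ≤ dg j)
    (hghom : ∀ j, (g j).IsHomogeneous (dg j))
    (e : Fin s → ℕ) (he : ∀ j, 2 ≤ e j)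
    (hKfact : K = (∏ i, ℓ i) * ∏ j, g j ^ e j) :
    n ≤ 6 := by
  by_contra hn6
  have hn7 : 7 ≤ n := by omega
  have hn1 : 1 ≤ n := by omega
  obtain ⟨p, f, hf, hFf⟩ := exists_fin_factors hFcr
  obtain ⟨q, g', hg', hGg⟩ := exists_fin_factors hGcr
  have hcop' : IsRelPrime F G := fun x => hcop x
  have hF0 : F ≠ 0 := by rw [hFf]; exact Finset.prod_ne_zero_iff.mpr fun i _ => (hf i).1
  have hG0 : G ≠ 0 := by rw [hGg]; exact Finset.prod_ne_zero_iff.mpr fun i _ => (hg' i).1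
  have hL0 : (∏ i, ℓ i) ≠ 0 := Finset.prod_ne_zero_iff.mpr fun i _ => (hℓ i).1
  have hS0 : (∏ j, g j ^ e j) ≠ 0 :=
    Finset.prod_ne_zero_iff.mpr fun j _ => pow_ne_zero _ (hgirr j).ne_zero
  have hK0 : K ≠ 0 := by rw [hKfact]; exact mul_ne_zero hL0 hS0
  have hKhom : K.IsHomogeneous d := by rw [hK]; exact (hF.C_mul a).add (hG.C_mul b)
  have hbu : IsUnit (C b : MvPolynomial (Fin (n + 1)) ℂ) := (IsUnit.mk0 b hb).map C
  have hau : IsUnit (C a : MvPolynomial (Fin (n + 1)) ℂ) := (IsUnit.mk0 a ha).map C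
  -- nondegeneracy
  have hdet : (pencilJac n F G).det ≠ 0 := by
    haveI : CharZero (FractionRing (MvPolynomial (Fin (n + 1)) ℂ)) :=
      charZero_of_injective_algebraMap (IsFractionRing.injective (MvPolynomial (Fin (n + 1)) ℂ) _)
    rw [hFf, hGg]
    rw [hFf] at hF
    rw [hGg] at hG
    rw [hFf, hGg] at hcop'
    refine jac_det_ne_zero hd (FractionRing (MvPolynomial (Fin (n + 1)) ℂ)) f g' (fun i => (hf i).1)
      (fun i => (hf i).2) (fun i => (hg' i).1) (fun i => (hg' i).2) hF hG hcop' ?_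
    intro v hv1 hv2
    have hsp : ∀ α ∈ Submodule.span ℂ
        {α : MvPolynomial (Fin (n + 1)) ℂ | IsLinearForm n α ∧ (α ∣ F ∨ α ∣ G)},
        ∑ l, algebraMap (MvPolynomial (Fin (n + 1)) ℂ)
          (FractionRing (MvPolynomial (Fin (n + 1)) ℂ)) (pderiv l α) * v l = 0 := by
      intro α hα
      induction hα using Submodule.span_induction with
      | mem α hα =>
        rcases hα with ⟨hα, h | h⟩
        · exact pairing_zero_of_dvd f hf v hv1 α hα (hFf ▸ h)
        · exact pairing_zero_of_dvd g' hg' v hv2 α hα (hGg ▸ h)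
      | zero => simp
      | add x y _ _ hx hy => simp only [map_add, add_mul, Finset.sum_add_distrib, hx, hy, add_zero]
      | smul c x _ hx =>
        simp only [smul_eq_C_mul, pderiv_C_mul, map_mul, mul_assoc]
        rw [← Finset.mul_sum, hx, mul_zero]
    ext i
    have h1 := hsp (X i) (hess i)
    rw [Finset.sum_eq_single i] at h1
    · simpa using h1
    · intro l _ hl
      rw [pderiv_X_of_ne hl.symm]
      simp
    · simp
  -- divisibility
  have hdF : F ^ (n - 1) ∣ (pencilJac n F G).det := by
    have := linear_prod_pow_dvd (P := F) (Q := G) hn1 f (fun i => (hf i).1) (fun i => (hf i).2)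
      (by rw [← hFf])
    rwa [← hFf] at this
  have hdG : G ^ (n - 1) ∣ (pencilJac n F G).det := by
    have := linear_prod_pow_dvd (P := G) (Q := F) hn1 g' (fun i => (hg' i).1) (fun i => (hg' i).2)
      (by rw [← hGg])
    rw [← hGg, det_swap] at this
    exact dvd_of_dvd_neg_pow isUnit_one.neg _ this
  have hKdet := det_member F G a b
  rw [← hK] at hKdet
  have hdL : (∏ i, ℓ i) ^ (n - 1) ∣ (pencilJac n F G).det := by
    have := linear_prod_pow_dvd (P := K) (Q := F) hn1 ℓ (fun i => (hℓ i).1) (fun i => (hℓ i).2)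
      (by rw [hKfact]; exact dvd_mul_right _ _)
    rw [hKdet] at this
    exact dvd_of_dvd_neg_pow hbu.neg _ this
  have hdS : (∏ j, g j ^ e j) ^ (n + 1) ∣ (pencilJac n F G).det ^ 2 := by
    have := nonreduced_pow_dvd hd hKhom hF hK0 g hgirr dg hdg hghom e he
      (by rw [hKfact]; exact dvd_mul_left _ _)
    rw [hKdet, mul_pow, ← pow_mul] at this
    exact dvd_of_dvd_neg_pow hbu.neg _ this
  -- coprimality
  have hFK : IsRelPrime F K := by
    intro x hx hxK
    refine hcop x hx ?_
    rw [hK, dvd_add_right (hx.mul_left _), hbu.dvd_mul_left] at hxK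
    exact hxK
  have hGK : IsRelPrime G K := by
    intro x hx hxK
    refine hcop x ?_ hx
    rw [hK, dvd_add_left (hx.mul_left _), hau.dvd_mul_left] at hxK
    exact hxK
  have hLS : IsRelPrime (∏ i, ℓ i) (∏ j, g j ^ e j) := by
    refine IsRelPrime.prod_left fun i _ => IsRelPrime.prod_right fun j _ => IsRelPrime.pow_right ?_
    have hirr := linear_irreducible (hℓ i).1 (hℓ i).2
    rw [hirr.isRelPrime_iff_not_dvd]
    intro hdv
    have hass := hirr.associated_of_dvd (hgirr j) hdv
    have h1 := totalDegree_le_of_dvd_of_isDomain hass.symm.dvd (hℓ i).1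
    rw [(hghom j).totalDegree (hgirr j).ne_zero, (hℓ i).2.totalDegree (hℓ i).1] at h1
    have := hdg j
    omega
  have hdvd : (((F ^ (n - 1)) ^ 2 * (G ^ (n - 1)) ^ 2) *
      (((∏ i, ℓ i) ^ (n - 1)) ^ 2 * (∏ j, g j ^ e j) ^ (n + 1))) ∣ (pencilJac n F G).det ^ 2 := by
    have hLK : (∏ i, ℓ i) ∣ K := by rw [hKfact]; exact dvd_mul_right _ _
    have hSK : (∏ j, g j ^ e j) ∣ K := by rw [hKfact]; exact dvd_mul_left _ _
    refine IsRelPrime.mul_dvd ?_ (IsRelPrime.mul_dvd ?_ (pow_dvd_pow_of_dvd hdF 2)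
      (pow_dvd_pow_of_dvd hdG 2)) (IsRelPrime.mul_dvd ?_ (pow_dvd_pow_of_dvd hdL 2) hdS)
    · refine IsRelPrime.mul_left ?_ ?_
      · exact IsRelPrime.mul_right (hFK.of_dvd_right hLK).pow.pow
          (IsRelPrime.pow_left (IsRelPrime.pow (hFK.of_dvd_right hSK)))
      · exact IsRelPrime.mul_right (hGK.of_dvd_right hLK).pow.pow
          (IsRelPrime.pow_left (IsRelPrime.pow (hGK.of_dvd_right hSK)))
    · exact hcop'.pow.pow
    · exact IsRelPrime.pow_left (IsRelPrime.pow hLS)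
  -- degrees
  have hLhom : (∏ i, ℓ i).IsHomogeneous r := by
    simpa using IsHomogeneous.prod Finset.univ ℓ (fun _ => 1) (fun i _ => (hℓ i).2)
  have hShom : (∏ j, g j ^ e j).IsHomogeneous (∑ j, dg j * e j) :=
    IsHomogeneous.prod Finset.univ _ _ (fun j _ => (hghom j).pow (e j))
  have hsum : r + ∑ j, dg j * e j = d := by
    have h1 := hLhom.mul hShom
    rw [← hKfact] at h1
    exact h1.inj_right hKhom hK0
  have hdeg := totalDegree_le_of_dvd_of_isDomain hdvd (pow_ne_zero 2 hdet)
  rw [((((hF.pow (n - 1)).pow 2).mul ((hG.pow (n - 1)).pow 2)).mul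
    (((hLhom.pow (n - 1)).pow 2).mul (hShom.pow (n + 1)))).totalDegree
      (mul_ne_zero (mul_ne_zero (pow_ne_zero _ (pow_ne_zero _ hF0)) (pow_ne_zero _ (pow_ne_zero _ hG0)))
        (mul_ne_zero (pow_ne_zero _ (pow_ne_zero _ hL0)) (pow_ne_zero _ hS0))),
    ((det_homogeneous hd hF hG).pow 2).totalDegree (pow_ne_zero 2 hdet)] at hdeg
  obtain ⟨k, rfl⟩ : ∃ k, n = k + 7 := ⟨n - 7, by omega⟩
  obtain ⟨d', rfl⟩ : ∃ d', d = d' + 1 := ⟨d - 1, by omega⟩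
  have e1 : k + 7 - 1 = k + 6 := by omega
  have e2 : 2 * (d' + 1) - 2 = 2 * d' := by omega
  rw [e1, e2] at hdeg
  generalize (∑ j, dg j * e j) = E at hdeg hsum
  have hE : (E : ℤ) = d' + 1 - r := by
    have : ((r + E : ℕ) : ℤ) = ((d' + 1 : ℕ) : ℤ) := by rw [hsum]
    push_cast at this
    linarith
  zify at hdeg
  rw [hE] at hdeg
  have t1 : (0 : ℤ) ≤ (k : ℤ) * d' := by positivity
  have t2 : (0 : ℤ) ≤ (k : ℤ) * r := by positivity
  have t3 : (0 : ℤ) ≤ (k : ℤ) := by positivity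
  have t4 : (0 : ℤ) ≤ (r : ℤ) := by positivity
  nlinarith
end
end
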